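/- arXiv:1803.04923 — 3 statements merged into one kernel-verified Lean document; each statement's English description precedes it below -/
import Mathlib

section
/- Let E and F be separable metric spaces equipped with their Borel σ-algebras, let (Ω, μ) be a probability space, and let Xₙ, X : Ω → E and Yₙ, Y : Ω → F be measurable maps such that (Xₙ, Yₙ) converges to (X, Y) in distribution. Let P : F → (probability measures on E) be a Markov kernel (i.e., each P_y is a probability measure and y ↦ P_y is measurable). Suppose that for every bounded continuous f : E → ℝ, the pair (E[f(Xₙ) | Yₙ], Yₙ), where E[f(Xₙ) | Yₙ] denotes the conditional expectation of f∘Xₙ given the σ-algebra generated by Yₙ, converges in distribution to (∫ f dP_Y, Y) as random elements of ℝ × F. Then P_Y is a regular conditional law of X given Y, in the sense that for every bounded Borel-measurable F₀ : E × F → ℝ one has ∫ F₀(X(ω), Y(ω)) dμ(ω) = ∫ ( ∫ F₀(x, Y(ω)) dP_{Y(ω)}(x) ) dμ(ω). -/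
open MeasureTheory Filter Topology

/-- A criterion for identifying a regular conditional law via limits: if `(Xₙ, Yₙ) → (X, Y)`
in distribution and, for every bounded continuous `f`, the pair
`(E[f(Xₙ) | Yₙ], Yₙ)` converges in distribution to `(∫ f dP_Y, Y)`, then `P_Y` is a regular
conditional law of `X` given `Y`. -/
theorem regular_conditional_law_of_convergence
    {E F : Type*} [MetricSpace E] [TopologicalSpace.SeparableSpace E]
    [MeasurableSpace E] [BorelSpace E]
    [MetricSpace F] [TopologicalSpace.SeparableSpace F]
    [MeasurableSpace F] [BorelSpace F]
    {Ω : Type*} [MeasurableSpace Ω] (μ : Measure Ω) [IsProbabilityMeasure μ]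
    (Xn : ℕ → Ω → E) (X : Ω → E) (Yn : ℕ → Ω → F) (Y : Ω → F)
    (hXn : ∀ n, Measurable (Xn n)) (hX : Measurable X)
    (hYn : ∀ n, Measurable (Yn n)) (hY : Measurable Y)
    (P : F → Measure E) (hP : ∀ y, IsProbabilityMeasure (P y)) (hPmeas : Measurable P)
    -- `(Xₙ, Yₙ) → (X, Y)` in distribution:
    (hconv : ∀ φ : E × F → ℝ, Continuous φ → (∃ C, ∀ p, |φ p| ≤ C) →
      Tendsto (fun n => ∫ ω, φ (Xn n ω, Yn n ω) ∂μ) atTop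
        (𝓝 (∫ ω, φ (X ω, Y ω) ∂μ)))
    -- for every bounded continuous `f : E → ℝ`, `(E[f(Xₙ)|Yₙ], Yₙ) → (∫ f dP_Y, Y)`
    -- in distribution:
    (hcond : ∀ f : E → ℝ, Continuous f → (∃ C, ∀ x, |f x| ≤ C) →
      ∀ φ : ℝ × F → ℝ, Continuous φ → (∃ C, ∀ p, |φ p| ≤ C) →
        Tendsto
          (fun n => ∫ ω,
            φ ((μ[fun ω' => f (Xn n ω') | MeasurableSpace.comap (Yn n) inferInstance]) ω,
              Yn n ω) ∂μ)
          atTop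
          (𝓝 (∫ ω, φ (∫ x, f x ∂(P (Y ω)), Y ω) ∂μ))) :
    ∀ F₀ : E × F → ℝ, Measurable F₀ → (∃ C, ∀ p, |F₀ p| ≤ C) →
      ∫ ω, F₀ (X ω, Y ω) ∂μ = ∫ ω, ∫ x, F₀ (x, Y ω) ∂(P (Y ω)) ∂μ := by
  have key : ∀ f : E → ℝ, Continuous f → (∃ C, ∀ x, |f x| ≤ C) →
      ∀ g : F → ℝ, Continuous g → (∃ C, ∀ x, |g x| ≤ C) →
      ∫ ω, f (X ω) * g (Y ω) ∂μ = ∫ ω, (∫ x, f x ∂(P (Y ω))) * g (Y ω) ∂μ := by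
    rintro f hf ⟨C, hC⟩ g hg ⟨D, hD⟩
    obtain ⟨ω₀⟩ := nonempty_of_isProbabilityMeasure μ
    have hC0 : 0 ≤ C := (abs_nonneg _).trans (hC (X ω₀))
    have hD0 : 0 ≤ D := (abs_nonneg _).trans (hD (Y ω₀))
    have clamp_eq : ∀ t : ℝ, |t| ≤ C → max (-C) (min C t) = t := by
      intro t ht
      rw [abs_le] at ht
      rw [min_eq_right ht.2, max_eq_right ht.1]
    have clamp_le : ∀ t : ℝ, |max (-C) (min C t)| ≤ C := by
      intro t
      rw [abs_le]
      exact ⟨le_max_left _ _, max_le (by linarith) (min_le_left _ _)⟩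
    have h1 := hconv (fun p => f p.1 * g p.2) (by fun_prop) ⟨C * D, fun p => by
      rw [abs_mul]; exact mul_le_mul (hC _) (hD _) (abs_nonneg _) hC0⟩
    have h2 := hcond f hf ⟨C, hC⟩ (fun p => max (-C) (min C p.1) * g p.2) (by fun_prop)
      ⟨C * D, fun p => by
        rw [abs_mul]; exact mul_le_mul (clamp_le _) (hD _) (abs_nonneg _) hC0⟩
    have hP1 : ∀ y, |∫ x, f x ∂(P y)| ≤ C := by
      intro y
      have := hP y
      have h := norm_integral_le_of_norm_le_const (μ := P y) (f := f) (C := C)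
        (Eventually.of_forall hC)
      simpa using h
    simp only [clamp_eq _ (hP1 _)] at h2
    refine tendsto_nhds_unique h1 (h2.congr fun n => ?_)
    have hm : MeasurableSpace.comap (Yn n) inferInstance ≤ (inferInstance : MeasurableSpace Ω) :=
      (hYn n).comap_le
    have hfi : Integrable (fun ω => f (Xn n ω)) μ :=
      Integrable.of_bound (hf.measurable.comp (hXn n)).aestronglyMeasurable C
        (Eventually.of_forall fun ω => hC _)
    have hfg : Integrable (fun ω => f (Xn n ω) * g (Yn n ω)) μ :=
      hfi.mul_bdd (c := D) (hg.measurable.comp (hYn n)).aestronglyMeasurable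
        (Eventually.of_forall fun ω => hD _)
    have hb : ∀ᵐ ω ∂μ, |(μ[fun ω' => f (Xn n ω') |
        MeasurableSpace.comap (Yn n) inferInstance]) ω| ≤ C :=
      ae_bdd_abs_condExp_of_ae_bdd_abs (Eventually.of_forall fun ω => hC _)
    have hgs : StronglyMeasurable[MeasurableSpace.comap (Yn n) inferInstance]
        (fun ω => g (Yn n ω)) :=
      (hg.measurable.comp (comap_measurable (Yn n))).stronglyMeasurable
    have hpull := condExp_mul_of_stronglyMeasurable_right hgs hfg hfi
    rw [← integral_condExp hm (f := fun ω => f (Xn n ω) * g (Yn n ω))]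
    refine integral_congr_ae ?_
    filter_upwards [hb, hpull] with ω h3 h4
    simp only [clamp_eq _ h3]
    exact h4.symm
  let κ : ProbabilityTheory.Kernel F E := ⟨P, hPmeas⟩
  have hκ : ProbabilityTheory.IsMarkovKernel κ := ⟨hP⟩
  have hXY : Measurable (fun ω => (X ω, Y ω)) := hX.prodMk hY
  have : IsProbabilityMeasure (μ.map Y) := Measure.isProbabilityMeasure_map hY.aemeasurable
  have : IsProbabilityMeasure (μ.map (fun ω => (X ω, Y ω))) :=
    Measure.isProbabilityMeasure_map hXY.aemeasurable
  let ν : Measure (E × F) := ((μ.map Y).compProd κ).map Prod.swap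
  have : IsProbabilityMeasure ν := Measure.isProbabilityMeasure_map measurable_swap.aemeasurable
  have hν : ∀ G : E × F → ℝ, Measurable G → (∃ C, ∀ p, |G p| ≤ C) →
      ∫ p, G p ∂ν = ∫ ω, ∫ x, G (x, Y ω) ∂(P (Y ω)) ∂μ := by
    rintro G hG ⟨C, hC⟩
    have hi : Integrable (fun p : F × E => G p.swap) ((μ.map Y).compProd κ) :=
      Integrable.of_bound (hG.comp measurable_swap).aestronglyMeasurable C
        (Eventually.of_forall fun p => hC _)
    rw [integral_map measurable_swap.aemeasurable hG.aestronglyMeasurable,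
      Measure.integral_compProd hi, integral_map hY.aemeasurable]
    · rfl
    · have hs : StronglyMeasurable (fun p : F × E => G p.swap) :=
        (hG.comp measurable_swap).stronglyMeasurable
      exact (hs.integral_kernel_prod_right' (κ := κ)).aestronglyMeasurable
  have heq : μ.map (fun ω => (X ω, Y ω)) = ν := by
    refine Measure.ext_of_integral_mul_boundedContinuousFunction fun f g => ?_
    have hfm : Measurable fun p : E × F => f p.1 * g p.2 :=
      (f.continuous.measurable.comp measurable_fst).mul
        (g.continuous.measurable.comp measurable_snd)
    rw [hν _ hfm ⟨‖f‖ * ‖g‖, fun p => by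
        rw [abs_mul]
        exact mul_le_mul (f.norm_coe_le_norm _) (g.norm_coe_le_norm _) (abs_nonneg _)
          (norm_nonneg _)⟩,
      integral_map hXY.aemeasurable hfm.aestronglyMeasurable]
    simp only [integral_mul_const]
    exact key f f.continuous ⟨‖f‖, f.norm_coe_le_norm⟩ g g.continuous ⟨‖g‖, g.norm_coe_le_norm⟩
  intro F₀ hF₀ hb
  rw [← hν F₀ hF₀ hb, ← heq, integral_map hXY.aemeasurable hF₀.aestronglyMeasurable]
end

section
/- For every real κ with 4 < κ < 8, the improper integral ∫₀^∞ (log w) · w^{1−κ/4}/(1+w) dw converges, and (−sin(πκ/4)/π) · ∫₀^∞ (log w) · w^{1−κ/4}/(1+w) dw = π·cos(πκ/4)/sin(πκ/4). Equivalently, a random variable on (0,∞) with probability density w ↦ −(sin(πκ/4)/π)·w^{1−κ/4}/(1+w) has expected logarithm equal to π·cot(πκ/4). -/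
open MeasureTheory Real Set

lemma aux_image : (fun w : ℝ => w / (1 + w)) '' Ioi 0 = Ioo 0 1 := by
  ext x
  simp only [mem_image, mem_Ioi, mem_Ioo]
  constructor
  · rintro ⟨w, hw, rfl⟩
    exact ⟨by positivity, by rw [div_lt_one (by positivity)]; linarith⟩
  · rintro ⟨h0, h1⟩
    have h2 : 0 < 1 - x := by linarith
    refine ⟨x / (1 - x), by positivity, ?_⟩
    field_simp
    ring

lemma aux_pointwise (s w : ℝ) (hw : 0 < w) :
    |1 / (1 + w) ^ 2| • (((w / (1 + w) : ℝ) : ℂ) ^ ((s : ℂ) - 1) *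
      (1 - ((w / (1 + w) : ℝ) : ℂ)) ^ ((1 - (s : ℂ)) - 1)) =
      (w : ℂ) ^ ((s : ℂ) - 1) • (((1 + w)⁻¹ : ℝ) : ℂ) := by
  have h1 : 0 < 1 + w := by linarith
  have e1 : (1 : ℂ) - ((w / (1 + w) : ℝ) : ℂ) = (((1 + w)⁻¹ : ℝ) : ℂ) := by
    rw [← Complex.ofReal_one, ← Complex.ofReal_sub]
    congr 1
    field_simp
    ring
  have e2 : (s : ℂ) - 1 = ((s - 1 : ℝ) : ℂ) := by push_cast; ring
  have e3 : (1 - (s : ℂ)) - 1 = ((-s : ℝ) : ℂ) := by push_cast; ring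
  rw [e1, e2, e3, ← Complex.ofReal_cpow (by positivity), ← Complex.ofReal_cpow (by positivity),
    ← Complex.ofReal_cpow hw.le, abs_of_pos (by positivity), Complex.real_smul, smul_eq_mul,
    ← Complex.ofReal_mul, ← Complex.ofReal_mul, ← Complex.ofReal_mul]
  congr 1
  rw [Real.div_rpow hw.le h1.le, Real.inv_rpow h1.le, Real.rpow_neg h1.le, inv_inv,
    Real.rpow_sub_one h1.ne']
  have := (Real.rpow_pos_of_pos h1 s).ne'
  field_simp

lemma aux_mellin (s : ℝ) (h0 : 0 < s) (h1 : s < 1) :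
    mellin (fun t : ℝ => (((1 + t)⁻¹ : ℝ) : ℂ)) s = ((π / Real.sin (π * s) : ℝ) : ℂ) := by
  have hb := Complex.betaIntegral_eq_Gamma_mul_div (s : ℂ) (1 - s) (by simpa) (by simpa)
  rw [Complex.Gamma_mul_Gamma_one_sub, add_sub_cancel, Complex.Gamma_one, div_one] at hb
  rw [Complex.ofReal_div, Complex.ofReal_sin, Complex.ofReal_mul, ← hb, Complex.betaIntegral, intervalIntegral.integral_of_le zero_le_one,
    integral_Ioc_eq_integral_Ioo, ← aux_image,
    integral_image_eq_integral_abs_deriv_smul (f' := fun w => 1 / (1 + w) ^ 2) measurableSet_Ioi]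
  · rw [mellin]
    refine setIntegral_congr_fun measurableSet_Ioi fun w hw => ?_
    exact (aux_pointwise s w hw).symm
  · intro x hx
    have hx' : (1 : ℝ) + x ≠ 0 := by have : 0 < x := hx; positivity
    have := (hasDerivAt_id x).div ((hasDerivAt_id x).const_add 1) hx'
    refine HasDerivAt.hasDerivWithinAt ?_
    refine this.congr_deriv ?_
    simp
  · intro x hx y hy h
    have h1 : 0 < x := hx
    have h2 : 0 < y := hy
    simp only at h
    field_simp at h
    linarith

/-- For `4 < κ < 8`, the integral `∫₀^∞ (log w) · w^(1-κ/4)/(1+w) dw` converges and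
`(-sin(πκ/4)/π) · ∫₀^∞ (log w) · w^(1-κ/4)/(1+w) dw = π cos(πκ/4)/sin(πκ/4)`. -/
theorem integral_log_mul_rpow_div_one_add (κ : ℝ) (hκ1 : 4 < κ) (hκ2 : κ < 8) :
    IntegrableOn (fun w : ℝ => Real.log w * (w ^ (1 - κ / 4) / (1 + w))) (Ioi 0) volume ∧
      (-Real.sin (π * κ / 4) / π) *
          ∫ w in Ioi (0 : ℝ), Real.log w * (w ^ (1 - κ / 4) / (1 + w)) =
        π * Real.cos (π * κ / 4) / Real.sin (π * κ / 4) := by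
  obtain ⟨s, hs⟩ : ∃ s : ℝ, s = 2 - κ / 4 := ⟨_, rfl⟩
  have h0 : 0 < s := by linarith
  have h1 : s < 1 := by linarith
  have hsin : 0 < Real.sin (π * s) :=
    Real.sin_pos_of_pos_of_lt_pi (by positivity) (by nlinarith [Real.pi_pos])
  have ek : π * κ / 4 = 2 * π - π * s := by rw [hs]; ring
  have es : 1 - κ / 4 = s - 1 := by rw [hs]; ring
  rw [ek, es, Real.sin_two_pi_sub, Real.cos_two_pi_sub]
  have key := mellin_hasDerivAt_of_isBigO_rpow (a := 1) (b := 0)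
    (f := fun t : ℝ => (((1 + t)⁻¹ : ℝ) : ℂ)) (s := (s : ℂ))
    (by
      refine ContinuousOn.locallyIntegrableOn ?_ measurableSet_Ioi
      refine Complex.continuous_ofReal.comp_continuousOn ?_
      refine ContinuousOn.inv₀ (by fun_prop) fun x hx => ?_
      have : 0 < x := hx
      positivity)
    (by
      refine Asymptotics.IsBigO.of_bound 1 ?_
      filter_upwards [Filter.eventually_gt_atTop 0] with x hx
      rw [Complex.norm_real, Real.rpow_neg_one, one_mul, Real.norm_of_nonneg (by positivity),
        Real.norm_of_nonneg (by positivity)]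
      gcongr
      linarith)
    (by simpa)
    (by
      refine Asymptotics.IsBigO.of_bound 1 ?_
      filter_upwards [self_mem_nhdsWithin] with x hx
      have : 0 < x := hx
      rw [Complex.norm_real, neg_zero, Real.rpow_zero, one_mul,
        Real.norm_of_nonneg (by positivity), norm_one]
      exact inv_le_one_of_one_le₀ (by linarith))
    (by simpa)
  obtain ⟨hc, hd⟩ := key
  have hpt : ∀ w ∈ Ioi (0 : ℝ), (w : ℂ) ^ ((s : ℂ) - 1) • (Real.log w • (((1 + w)⁻¹ : ℝ) : ℂ)) =
      ((Real.log w * (w ^ (s - 1) / (1 + w)) : ℝ) : ℂ) := by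
    intro w hw
    have hw' : 0 < w := hw
    have e2 : (s : ℂ) - 1 = ((s - 1 : ℝ) : ℂ) := by push_cast; ring
    rw [e2, ← Complex.ofReal_cpow hw'.le, Complex.real_smul, smul_eq_mul,
      ← Complex.ofReal_mul, ← Complex.ofReal_mul]
    congr 1
    ring
  have hint : IntegrableOn (fun w : ℝ => Real.log w * (w ^ (s - 1) / (1 + w))) (Ioi 0) volume := by
    have h2 : IntegrableOn (fun w : ℝ => ((Real.log w * (w ^ (s - 1) / (1 + w)) : ℝ) : ℂ))
        (Ioi 0) volume := IntegrableOn.congr_fun hc hpt measurableSet_Ioi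
    exact MeasureTheory.Integrable.re h2
  refine ⟨hint, ?_⟩
  have hval : mellin (fun t : ℝ => Real.log t • (((1 + t)⁻¹ : ℝ) : ℂ)) s =
      ((∫ w in Ioi (0 : ℝ), Real.log w * (w ^ (s - 1) / (1 + w)) : ℝ) : ℂ) := by
    rw [mellin, setIntegral_congr_fun measurableSet_Ioi hpt]
    exact integral_ofReal
  rw [hval] at hd
  have hd1 := hd.real_of_complex
  rw [Complex.ofReal_re] at hd1
  have hd2 : HasDerivAt (fun x : ℝ => π / Real.sin (π * x))
      (∫ w in Ioi (0 : ℝ), Real.log w * (w ^ (s - 1) / (1 + w))) s := by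
    refine hd1.congr_of_eventuallyEq ?_
    filter_upwards [Ioo_mem_nhds h0 h1] with x hx
    rw [aux_mellin x hx.1 hx.2, Complex.ofReal_re]
  have hd3 : HasDerivAt (fun x : ℝ => π / Real.sin (π * x))
      (-(π * (Real.cos (π * s) * π)) / Real.sin (π * s) ^ 2) s := by
    have := (hasDerivAt_const s π).div (((hasDerivAt_id s).const_mul π).sin) hsin.ne'
    refine this.congr_deriv ?_
    simp
  rw [hd2.unique hd3]
  have := Real.pi_pos.ne'
  field_simp
end

section
/- There is a unique κ₀ in the open interval (4,8) such that π·cos(πκ₀/4)/sin(πκ₀/4) + ψ(2−κ₀/4) − ψ(1) = 0, where ψ denotes the digamma function, i.e., the derivative of the function x ↦ log Γ(x) on (0,∞), and Γ is the real Gamma function. Moreover κ₀ ∈ (5,6), and for every κ ∈ (4,8) one has π·cos(πκ/4)/sin(πκ/4) + ψ(2−κ/4) − ψ(1) ≥ 0 if and only if κ ≤ κ₀. -/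
open Real Set

/-- The digamma function `ψ`: the derivative of `x ↦ log Γ(x)`. -/
noncomputable def digamma : ℝ → ℝ := deriv fun x : ℝ => Real.log (Real.Gamma x)

lemma aux_diff {x : ℝ} (hx : 0 < x) :
    HasDerivAt (fun x : ℝ => Real.log (Real.Gamma x)) (digamma x) x := by
  have hd : DifferentiableAt ℝ (fun x : ℝ => Real.log (Real.Gamma x)) x := by
    refine ((Real.differentiableAt_Gamma ?_).log (Real.Gamma_ne_zero ?_)) <;>
    exact fun m ↦ ne_of_gt (by have : (0 : ℝ) ≤ m := m.cast_nonneg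
                               linarith)
  exact hd.hasDerivAt

lemma aux_mono : MonotoneOn digamma (Ioi 0) :=
  Real.convexOn_log_Gamma.monotoneOn_deriv
    (fun _ hx => (aux_diff hx).differentiableAt)

lemma aux_val {x d : ℝ} (hx : 0 < x) (h : HasDerivAt Real.Gamma d x) :
    digamma x = d / Real.Gamma x :=
  (aux_diff hx).unique (h.log (Real.Gamma_pos_of_pos hx).ne')

lemma aux_half : digamma (1 / 2) - digamma 1 = - (2 * Real.log 2) := by
  rw [aux_val one_half_pos Real.hasDerivAt_Gamma_one_half,
    aux_val one_pos Real.hasDerivAt_Gamma_one, Real.Gamma_one_half_eq, Real.Gamma_one]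
  have : √π ≠ 0 := by positivity
  field_simp
  ring

lemma aux_sin {κ : ℝ} (h : κ ∈ Ioo (4 : ℝ) 8) : Real.sin (π * κ / 4) < 0 := by
  have hp := Real.pi_pos
  have h1 := h.1
  have h2 := h.2
  have : 0 < Real.sin (π * κ / 4 - π) := by
    apply Real.sin_pos_of_pos_of_lt_pi <;> nlinarith
  rw [Real.sin_sub_pi] at this
  linarith

/-- The function whose zero is sought. -/
noncomputable def auxF (κ : ℝ) : ℝ :=
  π * Real.cos (π * κ / 4) / Real.sin (π * κ / 4) + digamma (2 - κ / 4) - digamma 1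

lemma aux_anti : StrictAntiOn auxF (Ioo (4 : ℝ) 8) := by
  intro a ha b hb hab
  have hp := Real.pi_pos
  have h1 := ha.1
  have h2 := hb.2
  have hsa := aux_sin ha
  have hsb := aux_sin hb
  have hm : digamma (2 - b / 4) ≤ digamma (2 - a / 4) :=
    aux_mono (by simp only [mem_Ioi]; linarith) (by simp only [mem_Ioi]; linarith [hb.2])
      (by linarith)
  have hs : 0 < Real.sin (π * b / 4 - π * a / 4) := by
    apply Real.sin_pos_of_pos_of_lt_pi <;> nlinarith
  rw [Real.sin_sub] at hs
  have hc : π * Real.cos (π * b / 4) / Real.sin (π * b / 4)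
      < π * Real.cos (π * a / 4) / Real.sin (π * a / 4) := by
    rw [← sub_pos, div_sub_div _ _ hsa.ne hsb.ne]
    apply div_pos _ (mul_pos_of_neg_of_neg hsa hsb)
    nlinarith
  unfold auxF
  linarith

lemma aux_deriv {κ : ℝ} (h : κ ∈ Ioo (4 : ℝ) 8) :
    HasDerivAt (fun κ : ℝ => 4 * Real.log (Real.sin (π * κ / 4))
      - 4 * Real.log (Real.Gamma (2 - κ / 4)) - digamma 1 * κ) (auxF κ) κ := by
  have hs := (aux_sin h).ne
  have h1 : HasDerivAt (fun κ : ℝ => π * κ / 4) (π / 4) κ := by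
    simpa using ((hasDerivAt_id κ).const_mul π).div_const 4
  have h2 : HasDerivAt (fun κ : ℝ => 2 - κ / 4) (-(1 / 4)) κ := by
    simpa using ((hasDerivAt_id κ).div_const 4).const_sub 2
  have h3 := (h1.sin.log hs).const_mul 4
  have h4 := (HasDerivAt.comp κ (aux_diff (x := 2 - κ / 4) (by linarith [h.2])) h2).const_mul 4
  have h5 := (hasDerivAt_id κ).const_mul (digamma 1)
  refine ((h3.sub h4).sub h5).congr_deriv ?_
  unfold auxF
  ring

lemma aux_six : auxF 6 < 0 := by
  unfold auxF
  have e : π * 6 / 4 = π / 2 + π := by ring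
  have h := aux_half
  have hl := Real.log_pos (one_lt_two)
  rw [e, Real.cos_add_pi, Real.cos_pi_div_two]
  norm_num at h ⊢
  linarith

lemma aux_five : 0 < auxF 5 := by
  unfold auxF
  have e : π * 5 / 4 = π / 4 + π := by ring
  have h := aux_half
  have hl := Real.log_two_lt_d9
  have hp := Real.pi_gt_three
  have hm : digamma (1 / 2) ≤ digamma (2 - 5 / 4) :=
    aux_mono (by simp) (by simp only [mem_Ioi]; norm_num) (by norm_num)
  rw [e, Real.cos_add_pi, Real.sin_add_pi, Real.cos_pi_div_four, Real.sin_pi_div_four,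
    mul_div_assoc, div_self (by simp)]
  linarith

/-- There is a unique `κ₀ ∈ (4,8)` with `π cot(πκ₀/4) + ψ(2-κ₀/4) - ψ(1) = 0`;
moreover `κ₀ ∈ (5,6)`, and for `κ ∈ (4,8)` the quantity
`π cot(πκ/4) + ψ(2-κ/4) - ψ(1)` is nonnegative if and only if `κ ≤ κ₀`. -/
theorem exists_unique_kappa_zero :
    ∃ κ₀ : ℝ, κ₀ ∈ Ioo (4 : ℝ) 8 ∧
      π * Real.cos (π * κ₀ / 4) / Real.sin (π * κ₀ / 4) + digamma (2 - κ₀ / 4) - digamma 1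
        = 0 ∧
      (∀ κ ∈ Ioo (4 : ℝ) 8,
        π * Real.cos (π * κ / 4) / Real.sin (π * κ / 4) + digamma (2 - κ / 4) - digamma 1 = 0
          → κ = κ₀) ∧
      κ₀ ∈ Ioo (5 : ℝ) 6 ∧
      ∀ κ ∈ Ioo (4 : ℝ) 8,
        (0 ≤ π * Real.cos (π * κ / 4) / Real.sin (π * κ / 4) + digamma (2 - κ / 4) - digamma 1
          ↔ κ ≤ κ₀) := by
  obtain ⟨k, hk, hk0⟩ := exists_hasDerivWithinAt_eq_of_lt_of_gt (a := 5) (b := 6) (m := 0)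
    (f' := auxF) (by norm_num)
    (fun x hx => (aux_deriv (κ := x) ⟨by linarith [hx.1], by linarith [hx.2]⟩).hasDerivWithinAt)
    aux_five aux_six
  have hk' : k ∈ Ioo (4 : ℝ) 8 := ⟨by linarith [hk.1], by linarith [hk.2]⟩
  refine ⟨k, hk', hk0, fun x hx h => ?_, hk, fun x hx => ?_⟩
  · exact aux_anti.injOn hx hk' (Eq.trans h hk0.symm)
  · have := aux_anti.le_iff_ge hk' hx
    rw [hk0] at this
    exact this
end
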